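/- arXiv:1312.6331 — 3 statements merged into one kernel-verified Lean document; each statement's English description precedes it below -/
import Mathlib

section
/- Let J ⊆ I be ideals of A = ℤ[x₁,…,xₙ]. Let m be a positive integer that annihilates the torsion of A/J, i.e., every f ∈ A for which there exists a nonzero integer k with k·f ∈ J satisfies m·f ∈ J. Let m₁,…,m_t be pairwise coprime positive integers with m = m₁⋯m_t. Suppose (i) I and J generate the same ideal of ℚ[x₁,…,xₙ] (i.e., ι_ℚ(I) and ι_ℚ(J) generate equal ideals), and (ii) for each i = 1,…,t the ideals of (ℤ/m_iℤ)[x₁,…,xₙ] generated by ι_{ℤ/m_iℤ}(I) and ι_{ℤ/m_iℤ}(J) are equal. Then I = J. -/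
/-!
Equality over `ℚ` says that `I / J` is torsion, hence killed by `m`. Equality modulo `mᵢ` lets one
write `f ∈ I` as `g + mᵢ a` with `g ∈ J`; then `mᵢ a ∈ I`, so `a` is torsion modulo `J` and
`m a ∈ J`. Multiplying by `m / mᵢ` gives `(m / mᵢ) f ∈ J`. Since the `mᵢ` are pairwise
coprime, the cofactors `m / mᵢ` generate the unit ideal of `ℤ`, so `f ∈ J`.
-/

open MvPolynomial Finset

/-- Clearing denominators: if `f` lies in the extension of `J` to `ℚ[X]`, some nonzero integer
multiple of `f` lies in `J`. -/
theorem exists_int_mul_mem {n : ℕ} {J : Ideal (MvPolynomial (Fin n) ℤ)}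
    {f : MvPolynomial (Fin n) ℤ}
    (hf : MvPolynomial.map (Int.castRingHom ℚ) f ∈
      Ideal.map (MvPolynomial.map (Int.castRingHom ℚ)) J) :
    ∃ k : ℤ, k ≠ 0 ∧ C k * f ∈ J := by
  letI : Algebra (MvPolynomial (Fin n) ℤ) (MvPolynomial (Fin n) ℚ) := algebraMvPolynomial
  have hf' : algebraMap (MvPolynomial (Fin n) ℤ) (MvPolynomial (Fin n) ℚ) f ∈
      Ideal.map (algebraMap (MvPolynomial (Fin n) ℤ) (MvPolynomial (Fin n) ℚ)) J := by
    rw [MvPolynomial.algebraMap_def]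
    exact hf
  rw [IsLocalization.algebraMap_mem_map_algebraMap_iff
    ((nonZeroDivisors ℤ).map (C : ℤ →+* MvPolynomial (Fin n) ℤ))] at hf'
  obtain ⟨_, ⟨k, hk, rfl⟩, h⟩ := hf'
  exact ⟨k, nonZeroDivisors.ne_zero hk, h⟩

theorem exists_eq_add_C_mul {n d : ℕ} {J : Ideal (MvPolynomial (Fin n) ℤ)}
    {f : MvPolynomial (Fin n) ℤ}
    (hf : MvPolynomial.map (Int.castRingHom (ZMod d)) f ∈
      Ideal.map (MvPolynomial.map (Int.castRingHom (ZMod d))) J) :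
    ∃ g ∈ J, ∃ a, f = g + C (d : ℤ) * a := by
  obtain ⟨g, hg, hgf⟩ := (Ideal.mem_map_iff_of_surjective _
    (MvPolynomial.map_surjective _ (ZMod.intCast_surjective (n := d)))).1 hf
  have hdvd : C (d : ℤ) ∣ f - g := by
    rw [C_dvd_iff_zmod, map_sub, hgf, sub_self]
  obtain ⟨a, ha⟩ := hdvd
  exact ⟨g, hg, a, by rw [← ha]; ring⟩

/-- Main Lemma: if `J ⊆ I` are ideals of `ℤ[x₁,…,xₙ]`, `m > 0` annihilates the torsion
of `A/J`, `m = m₁⋯m_t` with the `mᵢ` pairwise coprime and positive, the ideals generated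
by `I` and `J` in `ℚ[X]` agree, and for each `i` the ideals generated in `(ℤ/mᵢℤ)[X]`
agree, then `I = J`. -/
theorem main_lemma (n : ℕ) (I J : Ideal (MvPolynomial (Fin n) ℤ)) (hJI : J ≤ I)
    (m : ℕ) (hm : 0 < m)
    (htor : ∀ f : MvPolynomial (Fin n) ℤ,
      (∃ k : ℤ, k ≠ 0 ∧ C k * f ∈ J) → C (m : ℤ) * f ∈ J)
    (t : ℕ) (ms : Fin t → ℕ) (hpos : ∀ i, 0 < ms i)
    (hcop : ∀ i j, i ≠ j → Nat.Coprime (ms i) (ms j))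
    (hprod : ∏ i, ms i = m)
    (hQ : Ideal.map (MvPolynomial.map (Int.castRingHom ℚ)) I =
          Ideal.map (MvPolynomial.map (Int.castRingHom ℚ)) J)
    (hmod : ∀ i, Ideal.map (MvPolynomial.map (Int.castRingHom (ZMod (ms i)))) I =
                 Ideal.map (MvPolynomial.map (Int.castRingHom (ZMod (ms i)))) J) :
    I = J := by
  refine le_antisymm (fun f hf => ?_) hJI
  have htorI : ∀ g ∈ I, ∃ k : ℤ, k ≠ 0 ∧ C k * g ∈ J := fun g hg =>
    exists_int_mul_mem (hQ ▸ Ideal.mem_map_of_mem _ hg)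
  -- The coprimality lemma below needs a nonempty family; the empty one has `m = 1`.
  rcases isEmpty_or_nonempty (Fin t) with ht | ht
  · have h1 : m = 1 := by rw [← hprod, Finset.univ_eq_empty, Finset.prod_empty]
    simpa [h1] using htor f (htorI f hf)
  have hcof : ∀ i, C (∏ j ∈ {i}ᶜ, (ms j : ℤ)) * f ∈ J := by
    intro i
    obtain ⟨g, hg, a, rfl⟩ := exists_eq_add_C_mul (hmod i ▸ Ideal.mem_map_of_mem _ hf)
    have haI : C (ms i : ℤ) * a ∈ I := (I.add_mem_iff_right (hJI hg)).1 hf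
    obtain ⟨k, hk, hkJ⟩ := htorI _ haI
    have hma : C (m : ℤ) * a ∈ J := htor a
      ⟨k * ms i, mul_ne_zero hk (by exact_mod_cast (hpos i).ne'), by
        rwa [C_mul, mul_assoc]⟩
    have hm' : (m : ℤ) = (∏ j ∈ {i}ᶜ, (ms j : ℤ)) * ms i := by
      rw [← hprod, Nat.cast_prod, mul_comm, Fintype.prod_eq_mul_prod_compl i]
    rw [hm', C_mul, mul_assoc] at hma
    rw [mul_add]
    exact J.add_mem (J.mul_mem_left _ hg) hma
  obtain ⟨μ, hμ⟩ := (exists_sum_eq_one_iff_pairwise_coprime'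
    (s := fun i => (ms i : ℤ))).2
      (fun i j hij => Nat.isCoprime_iff_coprime.2 (hcop i j hij))
  have hsum : f = ∑ i, C (μ i) * (C (∏ j ∈ {i}ᶜ, (ms j : ℤ)) * f) := by
    simp_rw [← mul_assoc, ← C_mul, ← Finset.sum_mul, ← map_sum]
    rw [hμ, C_1, one_mul]
  rw [hsum]
  exact J.sum_mem fun i _ => J.mul_mem_left _ (hcof i)
end

section
/- Let J ⊆ I be ideals of A = ℤ[x₁,…,xₙ]. Let m be a positive integer that annihilates the torsion of A/J, i.e., every f ∈ A for which there exists a nonzero integer k with k·f ∈ J satisfies m·f ∈ J. Suppose (i) I and J generate the same ideal of ℚ[x₁,…,xₙ], and (ii) the ideals of (ℤ/mℤ)[x₁,…,xₙ] generated by ι_{ℤ/mℤ}(I) and ι_{ℤ/mℤ}(J) are equal. Then I = J. -/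
open MvPolynomial

/-!
For `f ∈ I`, equality over `ℚ` means that some nonzero integer multiple of `f` lies in `J`
(clear denominators), so every element of `I` is torsion modulo `J`. Equality modulo `m` gives
`f = j + m a` with `j ∈ J`. Then `m a = f - j` lies in `I`, so it is torsion modulo `J`;
hence `a` is torsion modulo `J` as well, `m a ∈ J` by the choice of `m`, and `f ∈ J`.
-/

/-- Clearing denominators: `f` lies in the extension of `J` to `ℚ[X]` only if a nonzero integer
multiple of `f` lies in `J`. -/
lemma exists_C_mul_mem_of_map_rat {σ : Type*} {J : Ideal (MvPolynomial σ ℤ)}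
    {f : MvPolynomial σ ℤ}
    (hf : MvPolynomial.map (Int.castRingHom ℚ) f ∈
      Ideal.map (MvPolynomial.map (Int.castRingHom ℚ)) J) :
    ∃ k : ℤ, k ≠ 0 ∧ C k * f ∈ J := by
  let _ : Algebra (MvPolynomial σ ℤ) (MvPolynomial σ ℚ) := algebraMvPolynomial
  have h : algebraMap (MvPolynomial σ ℤ) (MvPolynomial σ ℚ) f ∈
      Ideal.map (algebraMap (MvPolynomial σ ℤ) (MvPolynomial σ ℚ)) J := hf
  rw [IsLocalization.algebraMap_mem_map_algebraMap_iff
    ((nonZeroDivisors ℤ).map (C (σ := σ)))] at h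
  obtain ⟨_, ⟨k, hk, rfl⟩, hkf⟩ := h
  exact ⟨k, nonZeroDivisors.ne_zero hk, hkf⟩

/-- `f` lies in the extension of `J` to `(ℤ/mℤ)[X]` only if `f ∈ J + mA`. -/
lemma exists_eq_add_C_mul_of_map_zmod {σ : Type*} {J : Ideal (MvPolynomial σ ℤ)} {m : ℕ}
    {f : MvPolynomial σ ℤ}
    (hf : MvPolynomial.map (Int.castRingHom (ZMod m)) f ∈
      Ideal.map (MvPolynomial.map (Int.castRingHom (ZMod m))) J) :
    ∃ j ∈ J, ∃ a, f = j + C (m : ℤ) * a := by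
  rw [Ideal.mem_map_iff_of_surjective _
    (MvPolynomial.map_surjective _ (ZMod.ringHom_surjective _))] at hf
  obtain ⟨j, hj, hjf⟩ := hf
  have hdvd : C (m : ℤ) ∣ f - j := by
    rw [MvPolynomial.C_dvd_iff_map_hom_eq_zero (Int.castRingHom (ZMod m)) (m : ℤ)
      (fun r => ZMod.intCast_zmod_eq_zero_iff_dvd r m), map_sub, hjf, sub_self]
  obtain ⟨a, ha⟩ := hdvd
  exact ⟨j, hj, a, by rw [← ha]; ring⟩

/-- If `J ⊆ I` are ideals of `ℤ[x₁,…,xₙ]`, `m > 0` annihilates the torsion of `A/J`,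
the ideals generated by `I` and `J` in `ℚ[X]` agree, and the ideals generated in
`(ℤ/mℤ)[X]` agree, then `I = J`. -/
theorem single_modulus (n : ℕ) (I J : Ideal (MvPolynomial (Fin n) ℤ)) (hJI : J ≤ I)
    (m : ℕ) (hm : 0 < m)
    (htor : ∀ f : MvPolynomial (Fin n) ℤ,
      (∃ k : ℤ, k ≠ 0 ∧ C k * f ∈ J) → C (m : ℤ) * f ∈ J)
    (hQ : Ideal.map (MvPolynomial.map (Int.castRingHom ℚ)) I =
          Ideal.map (MvPolynomial.map (Int.castRingHom ℚ)) J)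
    (hmod : Ideal.map (MvPolynomial.map (Int.castRingHom (ZMod m))) I =
            Ideal.map (MvPolynomial.map (Int.castRingHom (ZMod m))) J) :
    I = J := by
  refine le_antisymm (fun f hf => ?_) hJI
  obtain ⟨j, hj, a, rfl⟩ := exists_eq_add_C_mul_of_map_zmod (hmod ▸ Ideal.mem_map_of_mem _ hf)
  have hmaI : C (m : ℤ) * a ∈ I := (I.add_mem_iff_right (hJI hj)).mp hf
  obtain ⟨k, hk, hkJ⟩ := exists_C_mul_mem_of_map_rat (hQ ▸ Ideal.mem_map_of_mem _ hmaI)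
  refine J.add_mem hj (htor a ⟨k * m, mul_ne_zero hk (by exact_mod_cast hm.ne'), ?_⟩)
  rwa [C_mul, mul_assoc]
end

section
/- Let J ⊆ I be ideals of A = ℤ[x₁,…,xₙ]. Let m be a positive integer that annihilates the torsion of A/J, i.e., every h ∈ A for which there exists a nonzero integer k with k·h ∈ J satisfies m·h ∈ J. Let m₁,…,m_t be pairwise coprime positive integers with m = m₁⋯m_t, and set c_i = m/m_i = ∏_{j≠i} m_j. Suppose (i) I and J generate the same ideal of ℚ[x₁,…,xₙ], and (ii) for each i = 1,…,t the ideals of (ℤ/m_iℤ)[x₁,…,xₙ] generated by ι_{ℤ/m_iℤ}(I) and ι_{ℤ/m_iℤ}(J) are equal. Then for every f ∈ I and every i = 1,…,t one has c_i·f ∈ J. -/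
/-!
Let `f ∈ I`. Equality of the ideals modulo `mᵢ` gives `f = g + mᵢ h` with `g ∈ J`
(`exists_sub_eq_C_mul`). Equality over `ℚ` gives a nonzero integer `k` with `k f ∈ J`
(`exists_C_mul_mem`, by clearing denominators), so `(k mᵢ) h = k f - k g ∈ J`. Thus `h` is
torsion modulo `J`, whence `m h ∈ J`, and `cᵢ f = cᵢ g + m h ∈ J` because `cᵢ mᵢ = m`.
-/

open MvPolynomial Finset

/-- Clearing denominators: `ℚ[x]` is the localization of `ℤ[x]` at the nonzero integers. -/
lemma exists_C_mul_mem {n : ℕ} (J : Ideal (MvPolynomial (Fin n) ℤ))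
    (f : MvPolynomial (Fin n) ℤ)
    (hf : MvPolynomial.map (Int.castRingHom ℚ) f ∈
      Ideal.map (MvPolynomial.map (Int.castRingHom ℚ)) J) :
    ∃ k : ℤ, k ≠ 0 ∧ C k * f ∈ J := by
  letI : Algebra (MvPolynomial (Fin n) ℤ) (MvPolynomial (Fin n) ℚ) := algebraMvPolynomial
  have key := IsLocalization.algebraMap_mem_map_algebraMap_iff
    ((nonZeroDivisors ℤ).map (C : ℤ →+* MvPolynomial (Fin n) ℤ))
    (MvPolynomial (Fin n) ℚ) J f
  obtain ⟨_, ⟨k, hk, rfl⟩, hkf⟩ := key.1 hf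
  exact ⟨k, nonZeroDivisors.ne_zero hk, hkf⟩

lemma exists_sub_eq_C_mul {n : ℕ} (J : Ideal (MvPolynomial (Fin n) ℤ)) (q : ℕ)
    (f : MvPolynomial (Fin n) ℤ)
    (hf : MvPolynomial.map (Int.castRingHom (ZMod q)) f ∈
      Ideal.map (MvPolynomial.map (Int.castRingHom (ZMod q))) J) :
    ∃ g ∈ J, ∃ h, f - g = C (q : ℤ) * h := by
  have hsurj : Function.Surjective
      (MvPolynomial.map (σ := Fin n) (Int.castRingHom (ZMod q))) :=
    MvPolynomial.map_surjective _ (ZMod.ringHom_surjective _)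
  obtain ⟨g, hg, hgf⟩ := (Ideal.mem_map_iff_of_surjective _ hsurj).1 hf
  refine ⟨g, hg, ?_⟩
  have hdvd : C (q : ℤ) ∣ f - g := by
    rw [MvPolynomial.C_dvd_iff_zmod, map_sub, hgf, sub_self]
  exact hdvd

/-- Key step of the proof of the Main Lemma: under the hypotheses of the Main Lemma,
for every `f ∈ I` and every `i`, `cᵢ · f ∈ J` where `cᵢ = m / mᵢ = ∏_{j ≠ i} mⱼ`. -/
theorem key_step (n : ℕ) (I J : Ideal (MvPolynomial (Fin n) ℤ)) (hJI : J ≤ I)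
    (m : ℕ) (hm : 0 < m)
    (htor : ∀ h : MvPolynomial (Fin n) ℤ,
      (∃ k : ℤ, k ≠ 0 ∧ C k * h ∈ J) → C (m : ℤ) * h ∈ J)
    (t : ℕ) (ms : Fin t → ℕ) (hpos : ∀ i, 0 < ms i)
    (hcop : ∀ i j, i ≠ j → Nat.Coprime (ms i) (ms j))
    (hprod : ∏ i, ms i = m)
    (hQ : Ideal.map (MvPolynomial.map (Int.castRingHom ℚ)) I =
          Ideal.map (MvPolynomial.map (Int.castRingHom ℚ)) J)
    (hmod : ∀ i, Ideal.map (MvPolynomial.map (Int.castRingHom (ZMod (ms i)))) I =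
                 Ideal.map (MvPolynomial.map (Int.castRingHom (ZMod (ms i)))) J) :
    ∀ f ∈ I, ∀ i : Fin t,
      C ((∏ j ∈ Finset.univ.erase i, ms j : ℕ) : ℤ) * f ∈ J := by
  intro f hf i
  obtain ⟨k, hk, hkf⟩ := exists_C_mul_mem J f (hQ ▸ Ideal.mem_map_of_mem _ hf)
  obtain ⟨g, hg, h, hfg⟩ :=
    exists_sub_eq_C_mul J (ms i) f (hmod i ▸ Ideal.mem_map_of_mem _ hf)
  have hmh : C (m : ℤ) * h ∈ J := by
    refine htor h ⟨k * (ms i : ℤ), mul_ne_zero hk (by exact_mod_cast (hpos i).ne'), ?_⟩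
    rw [C_mul, mul_assoc, ← hfg, mul_sub]
    exact J.sub_mem hkf (J.mul_mem_left _ hg)
  have hc : (m : ℤ) = ((∏ j ∈ Finset.univ.erase i, ms j : ℕ) : ℤ) * (ms i : ℤ) := by
    rw [← hprod, ← Finset.prod_erase_mul _ _ (Finset.mem_univ i), Nat.cast_mul]
  rw [hc, C_mul, mul_assoc, ← hfg] at hmh
  have := J.add_mem hmh (J.mul_mem_left (C ((∏ j ∈ Finset.univ.erase i, ms j : ℕ) : ℤ)) hg)
  rwa [← mul_add, sub_add_cancel] at this
end
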